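/- ∑_{k=1}^∞ (−27/16)^k / (k² · C(3k,k)) = 6·arctan²((4√3 − √15)/11) − 2·(log 2)². -/

import Mathlib

open Real

lemma beta_int (n : ℕ) : ∀ m : ℕ, ∫ t in (0:ℝ)..1, t^m * (1-t)^n
    = (m.factorial * n.factorial : ℝ) / ((m+n+1).factorial : ℝ) := by
  induction n with
  | zero =>
    intro m
    have : ((m:ℝ)+1) ≠ 0 := by positivity
    have h2 : (m.factorial : ℝ) ≠ 0 := by positivity
    simp [Nat.factorial_succ]
    field_simp
  | succ n ih =>
    intro m
    have hd : ∀ t : ℝ, HasDerivAt (fun t : ℝ => t^(m+1) * (1-t)^(n+1))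
        (((m:ℝ)+1) * (t^m * (1-t)^(n+1)) - ((n:ℝ)+1) * (t^(m+1) * (1-t)^n)) t := by
      intro t
      have h1 := (hasDerivAt_pow (m+1) t)
      have h2 := ((hasDerivAt_id t).const_sub 1).pow (n+1)
      refine (h1.mul h2).congr_deriv ?_
      simp
      ring
    have hF := intervalIntegral.integral_eq_sub_of_hasDerivAt (a := 0) (b := 1)
      (fun t _ => hd t) (Continuous.intervalIntegrable (by fun_prop) _ _)
    rw [intervalIntegral.integral_sub (Continuous.intervalIntegrable (by fun_prop) _ _)
      (Continuous.intervalIntegrable (by fun_prop) _ _),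
      intervalIntegral.integral_const_mul, intervalIntegral.integral_const_mul, ih (m+1)] at hF
    simp at hF
    have hm : ((m:ℝ)+1) ≠ 0 := by positivity
    have e : m + 1 + n + 1 = m + (n+1) + 1 := by ring
    rw [e] at hF
    have h3 : ((m+(n+1)+1).factorial : ℝ) ≠ 0 := by positivity
    rw [sub_eq_zero] at hF
    apply mul_left_cancel₀ hm
    rw [hF, Nat.factorial_succ m, Nat.factorial_succ n]
    push_cast
    field_simp

lemma coef_int (k : ℕ) : ∫ t in (0:ℝ)..1, (t^k * (1-t)^(2*k+2))
    = 1 / (((k:ℝ)+1) * (((3*(k+1)).choose (k+1) : ℕ) : ℝ)) := by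
  rw [beta_int]
  rw [Nat.cast_choose ℝ (by omega : k+1 ≤ 3*(k+1))]
  have e1 : 3*(k+1) - (k+1) = 2*k+2 := by omega
  have e2 : k + (2*k+2) + 1 = 3*(k+1) := by ring
  rw [e1, e2, Nat.factorial_succ k]
  have : (k.factorial : ℝ) ≠ 0 := by positivity
  have : ((2*k+2).factorial : ℝ) ≠ 0 := by positivity
  have : ((3*(k+1)).factorial : ℝ) ≠ 0 := by positivity
  have hm : ((k:ℝ)+1) ≠ 0 := by positivity
  push_cast
  field_simp

lemma tbound {t : ℝ} (h0 : 0 ≤ t) (h1 : t ≤ 1) : t*(1-t)^2 ≤ 4/27 := by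
  nlinarith [mul_nonneg (sq_nonneg (3*t-1)) (by linarith : (0:ℝ) ≤ 4-3*t)]

lemma term_bound (k : ℕ) {x t : ℝ} (hx : |x| < 5) (h0 : 0 ≤ t) (h1 : t ≤ 1) :
    |x^k * (t^k * (1-t)^(2*k+2))| ≤ (20/27)^k := by
  have hs : 0 ≤ 1 - t := by linarith
  have e : x^k * (t^k * (1-t)^(2*k+2)) = (x * (t*(1-t)^2))^k * (1-t)^2 := by
    rw [mul_pow, mul_pow, ← pow_mul, pow_add]; ring
  have hp : 0 ≤ t*(1-t)^2 := by positivity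
  have hb : |x * (t*(1-t)^2)| ≤ 20/27 := by
    rw [abs_mul, abs_of_nonneg hp]
    nlinarith [tbound h0 h1, abs_nonneg x]
  rw [e, abs_mul, abs_pow, abs_of_nonneg (sq_nonneg (1-t))]
  calc |x * (t*(1-t)^2)|^k * (1-t)^2 ≤ (20/27)^k * 1 := by
        apply mul_le_mul (pow_le_pow_left₀ (abs_nonneg _) hb k) _ (by positivity) (by positivity)
        nlinarith
    _ = (20/27)^k := by ring

lemma summ_geo : Summable (fun k : ℕ => (20/27 : ℝ)^k) :=
  summable_geometric_of_lt_one (by norm_num) (by norm_num)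

lemma int_sum {x : ℝ} (hx : |x| < 5) :
    HasSum (fun k : ℕ => ∫ t in (0:ℝ)..1, x^k * (t^k * (1-t)^(2*k+2)))
      (∫ t in (0:ℝ)..1, (1-t)^2 / (1 - x * (t*(1-t)^2))) := by
  refine intervalIntegral.hasSum_integral_of_dominated_convergence
    (fun k _ => (20/27 : ℝ)^k) (fun k => ?_) (fun k => ?_) ?_ ?_ ?_
  · exact (Continuous.aestronglyMeasurable (by fun_prop))
  · refine Filter.Eventually.of_forall fun t ht => ?_
    rw [Set.uIoc_of_le zero_le_one] at ht
    exact term_bound k hx ht.1.le ht.2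
  · exact Filter.Eventually.of_forall fun t _ => summ_geo
  · exact intervalIntegrable_const
  · refine Filter.Eventually.of_forall fun t ht => ?_
    rw [Set.uIoc_of_le zero_le_one] at ht
    have hs : 0 ≤ 1 - t := by linarith [ht.2]
    have h0 := ht.1.le
    have hp : 0 ≤ t*(1-t)^2 := by positivity
    have hb : |x * (t*(1-t)^2)| < 1 := by
      rw [abs_mul, abs_of_nonneg hp]
      nlinarith [tbound h0 ht.2, abs_nonneg x]
    have := (hasSum_geometric_of_abs_lt_one hb).mul_right ((1-t)^2)
    have e : (fun k : ℕ => x^k * (t^k * (1-t)^(2*k+2)))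
        = fun k : ℕ => (x * (t*(1-t)^2))^k * (1-t)^2 := by
      funext k
      rw [mul_pow, mul_pow, ← pow_mul, pow_add]; ring
    rw [div_eq_inv_mul, e]
    exact this

noncomputable def GG (x : ℝ) : ℝ :=
  ∑' k : ℕ, x^(k+1) / (((k:ℝ)+1)^2 * (((3*(k+1)).choose (k+1) : ℕ) : ℝ))

lemma GG_deriv {x : ℝ} (hx : |x| < 5) :
    HasDerivAt GG (∫ t in (0:ℝ)..1, (1-t)^2 / (1 - x * (t*(1-t)^2))) x := by
  rw [← (int_sum hx).tsum_eq]
  refine hasDerivAt_tsum_of_isPreconnected (t := Metric.ball (0:ℝ) 5) (y₀ := 0)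
    (u := fun k : ℕ => (20/27 : ℝ)^k)
    (g' := fun k x => ∫ t in (0:ℝ)..1, x^k * (t^k * (1-t)^(2*k+2)))
    summ_geo Metric.isOpen_ball (convex_ball _ _).isPreconnected ?_ ?_ ?_ ?_ ?_
  · intro k y _
    have h := (hasDerivAt_pow (k+1) y).div_const
      (((k:ℝ)+1)^2 * (((3*(k+1)).choose (k+1) : ℕ) : ℝ))
    refine h.congr_deriv ?_
    rw [intervalIntegral.integral_const_mul, coef_int]
    have hm : ((k:ℝ)+1) ≠ 0 := by positivity
    have hc : (((3*(k+1)).choose (k+1) : ℕ) : ℝ) ≠ 0 := by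
      have := Nat.choose_pos (by omega : k+1 ≤ 3*(k+1))
      positivity
    push_cast
    field_simp
  · intro k y hy
    have hy' : |y| < 5 := by simpa using hy
    have := intervalIntegral.norm_integral_le_of_norm_le_const (a := 0) (b := 1)
      (f := fun t : ℝ => y^k * (t^k * (1-t)^(2*k+2))) (C := (20/27)^k) (by
        intro t ht
        rw [Set.uIoc_of_le zero_le_one] at ht
        exact term_bound k hy' ht.1.le ht.2)
    simpa using this
  · simp
  · simp only [ne_eq, Nat.succ_ne_zero, not_false_eq_true, zero_pow, zero_div]
    exact summable_zero
  · simpa using hx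

noncomputable def xx (u : ℝ) : ℝ := -27*u^3/(1-u^3)^2

lemma u3 {u : ℝ} (h0 : 0 ≤ u) (h1 : u ≤ 1/2) : u^3 ≤ 1/8 := by
  have := pow_le_pow_left₀ h0 h1 3
  norm_num at this ⊢
  linarith

lemma xx_abs {u : ℝ} (h0 : 0 ≤ u) (h1 : u ≤ 1/2) : |xx u| < 5 := by
  have h := u3 h0 h1
  have h2 : 0 ≤ u^3 := by positivity
  have hp : 0 < (1-u^3)^2 := by
    have : 0 < 1 - u^3 := by linarith
    positivity
  unfold xx
  rw [abs_lt, lt_div_iff₀ hp, div_lt_iff₀ hp]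
  constructor <;> nlinarith

lemma xx_deriv {u : ℝ} (h0 : 0 ≤ u) (h1 : u ≤ 1/2) :
    HasDerivAt xx (-81*u^2*(1+u^3)/(1-u^3)^3) u := by
  have h := u3 h0 h1
  have hp : 1 - u^3 ≠ 0 := by linarith
  have ha := (hasDerivAt_pow 3 u)
  have := (ha.const_mul (-27)).div ((ha.const_sub 1).pow 2) (pow_ne_zero 2 hp)
  refine this.congr_deriv ?_
  simp
  field_simp
  ring

lemma re_pos {u t : ℝ} (h0 : 0 ≤ u) (h1 : u ≤ 1/2) (t0 : 0 ≤ t) (t1 : t ≤ 1) :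
    0 < 2*(1+u+u^2)^2 - 3*u*(1+4*u+u^2)*t := by
  have : 3*u*(1+4*u+u^2)*t ≤ 3*u*(1+4*u+u^2) := by
    have : 0 ≤ 3*u*(1+4*u+u^2) := by positivity
    nlinarith
  have h2 : 0 < 2 + u - 6*u^2 := by nlinarith
  have : 0 ≤ u^3 + 2*u^4 := by positivity
  nlinarith

lemma arctan3 {u : ℝ} (h0 : 0 ≤ u) (h1 : u ≤ 1/2) :
    arctan (√3 * (3*u*(1-u^2)*1) / (2*(1+u+u^2)^2 - 3*u*(1+4*u+u^2)*1))
      = 3 * arctan (√3*u/(2+u)) := by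
  have s3 : √3 ^ 2 = 3 := Real.sq_sqrt (by norm_num)
  have hr := re_pos h0 h1 zero_le_one le_rfl
  have h2 : 0 < 2 + u := by linarith
  set y := √3*u/(2+u) with hy
  have hyy : y * y = 3*u^2/(2+u)^2 := by
    rw [hy]; field_simp; rw [s3]; ring
  have hlt : y*y < 1 := by
    rw [hyy, div_lt_one (by positivity)]; nlinarith
  have hA : arctan y + arctan y = arctan (√3*u*(2+u)/(2+2*u-u^2)) := by
    rw [arctan_add hlt, hyy]
    congr 1
    have : 1 - 3*u^2/(2+u)^2 = 2*(2+2*u-u^2)/(2+u)^2 := by field_simp; ring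
    have h4 : 2+2*u-u^2 ≠ 0 := by nlinarith
    rw [this, hy]
    field_simp
    try ring
  have h4 : 0 < 2+2*u-u^2 := by nlinarith
  have hz : (√3*u*(2+u)/(2+2*u-u^2)) * y = 3*u^2/(2+2*u-u^2) := by
    rw [hy, div_mul_div_comm, div_eq_div_iff (by positivity) h4.ne']
    linear_combination (u^2*(2+u)*(2+2*u-u^2)) * s3
  have hlt2 : (√3*u*(2+u)/(2+2*u-u^2)) * y < 1 := by
    rw [hz, div_lt_one h4]; nlinarith
  have : 3 * arctan y = (arctan y + arctan y) + arctan y := by ring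
  rw [this, hA, arctan_add hlt2, hz]
  congr 1
  have h5 : 1 - 3*u^2/(2+2*u-u^2) = 2*(1+u-2*u^2)/(2+2*u-u^2) := by
    rw [eq_div_iff h4.ne', sub_mul, div_mul_cancel₀ _ h4.ne']; ring
  have h6 : 1+u-2*u^2 ≠ 0 := by nlinarith
  have h7 : 2*(1+u+u^2)^2 - 3*u*(1+4*u+u^2)*1 = (1+u-2*u^2)*(2-u-u^2) := by ring
  have h8 : 2-u-u^2 ≠ 0 := by nlinarith
  rw [h5, h7, hy]
  have h4' := h4.ne'
  generalize hA1 : 1+u-2*u^2 = P at *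
  generalize hA2 : 2-u-u^2 = S at *
  generalize hA3 : 2+2*u-u^2 = T at *
  field_simp
  subst hA1 hA2 hA3
  ring

lemma key_int {u : ℝ} (h0 : 0 < u) (h1 : u ≤ 1/2) :
    (∫ t in (0:ℝ)..1, (1-t)^2 / (1 - xx u * (t*(1-t)^2))) * (-81*u^2*(1+u^3)/(1-u^3)^3)
    = 6*√3*arctan (√3*u/(2+u))/(1+u+u^2)
      - (log (1+u+u^2) - 2*log (1-u)) * (3*(1+u)/((1-u)*(1+u+u^2))) := by
  have s3 : √3 ^ 2 = 3 := Real.sq_sqrt (by norm_num)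
  have hu1 : 0 < 1 - u := by linarith
  have hD : 0 < 1+u+u^2 := by positivity
  have hu3 : 1 - u^3 = (1-u)*(1+u+u^2) := by ring
  have hu3p : 0 < 1 - u^3 := by rw [hu3]; positivity
  have hfac : ∀ t : ℝ, (1-u^3)^2 + 27*u^3*(t*(1-t)^2)
      = ((1-u)^2+3*u*t) * ((1+u+u^2)^2 - 3*u*(1+4*u+u^2)*t + 9*u^2*t^2) := by
    intro t; ring
  have hden : ∀ t : ℝ, 1 - xx u * (t*(1-t)^2)
      = ((1-u)^2+3*u*t) * ((1+u+u^2)^2 - 3*u*(1+4*u+u^2)*t + 9*u^2*t^2) / (1-u^3)^2 := by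
    intro t
    rw [← hfac, xx]; field_simp; ring
  have hLp : ∀ t : ℝ, 0 ≤ t → 0 < (1-u)^2+3*u*t := by intro t ht; positivity
  have hQ4 : ∀ t : ℝ, 4*(1+u+u^2)^2*((1+u+u^2)^2 - 3*u*(1+4*u+u^2)*t + 9*u^2*t^2)
      = (2*(1+u+u^2)^2 - 3*u*(1+4*u+u^2)*t)^2 + 3*(3*u*(1-u^2)*t)^2 := by
    intro t; ring
  have hQp : ∀ t : ℝ, 0 ≤ t → t ≤ 1 →
      0 < (1+u+u^2)^2 - 3*u*(1+4*u+u^2)*t + 9*u^2*t^2 := by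
    intro t ht ht1
    have hr := re_pos h0.le h1 ht ht1
    have : 0 < 4*(1+u+u^2)^2*((1+u+u^2)^2 - 3*u*(1+4*u+u^2)*t + 9*u^2*t^2) := by
      rw [hQ4]; positivity
    exact pos_of_mul_pos_right this (by positivity)
  have hderiv : ∀ t ∈ Set.uIcc (0:ℝ) 1, HasDerivAt (fun t : ℝ =>
      2*√3/(1+u+u^2) * arctan (√3 * (3*u*(1-u^2)*t) / (2*(1+u+u^2)^2 - 3*u*(1+4*u+u^2)*t))
      - (1+u)/(u*(1-u)) * log ((1-u)^2+3*u*t)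
      - (1-u^2)/(u*(1+u+u^2)) * log ((1+u+u^2)^2 - 3*u*(1+4*u+u^2)*t + 9*u^2*t^2))
      ((1-t)^2 / (1 - xx u * (t*(1-t)^2)) * (-81*u^2*(1+u^3)/(1-u^3)^3)) t := by
    intro t ht
    rw [Set.uIcc_of_le zero_le_one] at ht
    have hr := re_pos h0.le h1 ht.1 ht.2
    have hL := hLp t ht.1
    have hQ := hQp t ht.1 ht.2
    have d1 : HasDerivAt (fun t : ℝ => √3 * (3*u*(1-u^2)*t)) (√3 * (3*u*(1-u^2))) t := by
      simpa using ((hasDerivAt_id t).const_mul (3*u*(1-u^2))).const_mul (√3)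
    have d2 : HasDerivAt (fun t : ℝ => 2*(1+u+u^2)^2 - 3*u*(1+4*u+u^2)*t)
        (-(3*u*(1+4*u+u^2))) t := by
      simpa using ((hasDerivAt_id t).const_mul (3*u*(1+4*u+u^2))).const_sub (2*(1+u+u^2)^2)
    have d3 : HasDerivAt (fun t : ℝ => (1-u)^2+3*u*t) (3*u) t := by
      simpa using ((hasDerivAt_id t).const_mul (3*u)).const_add ((1-u)^2)
    have d4 : HasDerivAt (fun t : ℝ => (1+u+u^2)^2 - 3*u*(1+4*u+u^2)*t + 9*u^2*t^2)
        (-(3*u*(1+4*u+u^2)) + 9*u^2*(2*t)) t := by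
      have := (((hasDerivAt_id t).const_mul (3*u*(1+4*u+u^2))).const_sub ((1+u+u^2)^2)).add
        ((hasDerivAt_pow 2 t).const_mul (9*u^2))
      refine this.congr_deriv ?_
      simp
    have da : HasDerivAt (fun t : ℝ => arctan (√3 * (3*u*(1-u^2)*t) /
        (2*(1+u+u^2)^2 - 3*u*(1+4*u+u^2)*t)))
        (√3 * (3*u*(1-u^2)) / (2 * ((1+u+u^2)^2 - 3*u*(1+4*u+u^2)*t + 9*u^2*t^2))) t := by
      refine (d1.div d2 hr.ne').arctan.congr_deriv ?_
      have e : 1 + (√3 * (3*u*(1-u^2)*t) / (2*(1+u+u^2)^2 - 3*u*(1+4*u+u^2)*t))^2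
          = 4*(1+u+u^2)^2*((1+u+u^2)^2 - 3*u*(1+4*u+u^2)*t + 9*u^2*t^2) /
            (2*(1+u+u^2)^2 - 3*u*(1+4*u+u^2)*t)^2 := by
        rw [hQ4, div_pow, mul_pow, s3, eq_div_iff (by positivity), add_mul,
          div_mul_cancel₀ _ (by positivity)]
        ring
      simp only [Pi.div_apply]
      rw [e]
      generalize hR : 2*(1+u+u^2)^2 - 3*u*(1+4*u+u^2)*t = R at *
      have hR' : 3*u*(1+4*u+u^2)*t = 2*(1+u+u^2)^2 - R := by linarith
      generalize (1+u+u^2)^2 - 3*u*(1+4*u+u^2)*t + 9*u^2*t^2 = Q at *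
      have e2 : √3 * (3*u*(1-u^2)) * R - √3 * (3*u*(1-u^2)*t) * -(3*u*(1+4*u+u^2))
          = √3 * (3*u*(1-u^2)) * (2*(1+u+u^2)^2) := by
        linear_combination √3 * (3*u*(1-u^2)) * hR'
      rw [e2]
      field_simp
      try ring
    have := ((da.const_mul (2*√3/(1+u+u^2))).sub
      ((d3.log hL.ne').const_mul ((1+u)/(u*(1-u))))).sub
      ((d4.log hQ.ne').const_mul ((1-u^2)/(u*(1+u+u^2))))
    refine this.congr_deriv ?_
    rw [hden, hu3]
    have e1 : 2*√3/(1+u+u^2) * (√3 * (3*u*(1-u^2)) /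
        (2 * ((1+u+u^2)^2 - 3*u*(1+4*u+u^2)*t + 9*u^2*t^2)))
        = 3 * (3*u*(1-u^2)) / ((1+u+u^2) * ((1+u+u^2)^2 - 3*u*(1+4*u+u^2)*t + 9*u^2*t^2)) := by
      generalize (1+u+u^2)^2 - 3*u*(1+4*u+u^2)*t + 9*u^2*t^2 = Q at *
      field_simp
      rw [s3]
    rw [e1]
    have hu1' := hu1.ne'
    have hD' := hD.ne'
    have hL' := hL.ne'
    have hQ' := hQ.ne'
    generalize hQd : (1+u+u^2)^2 - 3*u*(1+4*u+u^2)*t + 9*u^2*t^2 = Q at *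
    generalize hLd : (1-u)^2+3*u*t = L at *
    generalize hDd : 1+u+u^2 = D at *
    generalize hVd : 1-u = V at *
    field_simp
    subst hQd hLd hDd hVd
    ring
  rw [← intervalIntegral.integral_mul_const]
  rw [intervalIntegral.integral_eq_sub_of_hasDerivAt hderiv]
  · rw [arctan3 h0.le h1]
    have q1 : (1+u+u^2)^2 - 3*u*(1+4*u+u^2)*1 + 9*u^2*1^2 = (1-u)^2*(1+u+u^2) := by ring
    have q2 : (1-u)^2+3*u*1 = 1+u+u^2 := by ring
    have q3 : (1+u+u^2)^2 - 3*u*(1+4*u+u^2)*0 + 9*u^2*0^2 = (1+u+u^2)^2 := by ring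
    have q4 : (1-u)^2+3*u*0 = (1-u)^2 := by ring
    rw [q1, q2, q3, q4, Real.log_mul (by positivity) (by positivity), Real.log_pow, Real.log_pow]
    simp only [mul_zero, zero_div, arctan_zero]
    generalize log (1+u+u^2) = l
    generalize log (1-u) = a
    field_simp
    push_cast
    ring
  · apply ContinuousOn.intervalIntegrable
    rw [Set.uIcc_of_le zero_le_one]
    apply ContinuousOn.mul _ continuousOn_const
    apply ContinuousOn.div (by fun_prop) (by fun_prop)
    intro t ht
    rw [hden]
    have := hLp t ht.1
    have := hQp t ht.1 ht.2
    positivity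

noncomputable def FF (u : ℝ) : ℝ :=
  6*(arctan (√3*u/(2+u)))^2 - (log (1+u+u^2) - 2*log (1-u))^2/2

lemma FF_deriv {u : ℝ} (h0 : 0 ≤ u) (h1 : u ≤ 1/2) :
    HasDerivAt FF (6*√3*arctan (√3*u/(2+u))/(1+u+u^2)
      - (log (1+u+u^2) - 2*log (1-u)) * (3*(1+u)/((1-u)*(1+u+u^2)))) u := by
  have s3 : √3 ^ 2 = 3 := Real.sq_sqrt (by norm_num)
  have hu1 : 0 < 1 - u := by linarith
  have hD : 0 < 1+u+u^2 := by positivity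
  have h2 : 0 < 2+u := by positivity
  have da : HasDerivAt (fun u : ℝ => arctan (√3*u/(2+u))) (√3/(2*(1+u+u^2))) u := by
    have := (((hasDerivAt_id u).const_mul (√3)).div ((hasDerivAt_id u).const_add 2) h2.ne').arctan
    refine this.congr_deriv ?_
    simp only [id, Pi.div_apply]
    have e : 1 + (√3*u/(2+u))^2 = 4*(1+u+u^2)/(2+u)^2 := by
      rw [div_pow, mul_pow, s3]; field_simp; ring
    rw [e]; field_simp; ring
  have dl : HasDerivAt (fun u : ℝ => log (1+u+u^2)) ((1+2*u)/(1+u+u^2)) u := by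
    have := (((hasDerivAt_id u).const_add 1).add (hasDerivAt_pow 2 u)).log hD.ne'
    refine this.congr_deriv ?_
    simp
  have dm : HasDerivAt (fun u : ℝ => log (1-u)) (-1/(1-u)) u :=
    ((hasDerivAt_id u).const_sub 1).log hu1.ne'
  have := ((da.pow 2).const_mul 6).sub (((dl.sub (dm.const_mul 2)).pow 2).div_const 2)
  refine this.congr_deriv ?_
  simp
  generalize log (1+u+u^2) = l
  generalize log (1-u) = a
  generalize arctan (√3*u/(2+u)) = A
  field_simp
  ring

lemma GF {b : ℝ} (h0 : 0 < b) (h1 : b ≤ 1/2) : GG (xx b) = FF b := by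
  have hd : ∀ u : ℝ, 0 ≤ u → u ≤ 1/2 → HasDerivAt (fun u => GG (xx u) - FF u) _ u :=
    fun u hu hu' => ((GG_deriv (xx_abs hu hu')).comp u (xx_deriv hu hu')).sub (FF_deriv hu hu')
  obtain ⟨c, _, hc⟩ := exists_hasDerivAt_eq_slope (fun u => GG (xx u) - FF u) (fun _ => 0) h0
    (fun u hu => (hd u hu.1 (hu.2.trans h1)).continuousAt.continuousWithinAt)
    (fun u hu => (hd u hu.1.le (hu.2.le.trans h1)).congr_deriv (by
      rw [key_int hu.1 (hu.2.le.trans h1), sub_self]))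
  have hz : GG (xx 0) - FF 0 = 0 := by simp [GG, xx, FF]
  simp only [hz, sub_zero] at hc
  rw [eq_div_iff h0.ne'] at hc
  linarith

theorem stmt_14 :
    ∑' k : ℕ, (-(27/16) : ℝ)^(k+1) / (((k:ℝ)+1)^2 * (((3*(k+1)).choose (k+1) : ℕ) : ℝ)) =
    6*(Real.arctan ((4*Real.sqrt 3 - Real.sqrt 15)/11))^2 - 2*(Real.log 2)^2 := by
  have s5 : √5 ^ 2 = 5 := Real.sq_sqrt (by norm_num)
  have l5 : 2 < √5 := by rw [Real.lt_sqrt (by norm_num)]; norm_num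
  have u5 : √5 < 3 := by rw [Real.sqrt_lt (by norm_num) (by norm_num)]; norm_num
  have hb0 : 0 < (3-√5)/2 := by linarith
  have hb1 : (3-√5)/2 ≤ 1/2 := by linarith
  have h := GF hb0 hb1
  set b := (3-√5)/2 with hb
  have hbq : b^2 = 3*b - 1 := by rw [hb]; linear_combination s5/4
  have hb3 : b^3 = 8*b - 3 := by linear_combination (b+3)*hbq
  have hx : xx b = -(27/16) := by
    have : 1 - b^3 ≠ 0 := by have := u3 hb0.le hb1; linarith
    rw [xx, div_eq_iff (by positivity), hb3]
    linear_combination 108*hbq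
  have hlog : log (1+b+b^2) - 2*log (1-b) = 2*log 2 := by
    have h1b : 0 < 1 - b := by linarith
    have e : 1+b+b^2 = (2*(1-b))^2 := by linear_combination (-3)*hbq
    rw [e, Real.log_pow, Real.log_mul (by norm_num) h1b.ne']
    push_cast; ring
  have harg : √3*b/(2+b) = (4*√3-√15)/11 := by
    have e : √15 = √3*√5 := by
      rw [← Real.sqrt_mul (by norm_num)]; norm_num
    rw [e, div_eq_div_iff (by linarith) (by norm_num), hb]
    linear_combination (-√3/2)*s5
  rw [hx, FF, hlog, harg] at h
  rw [GG] at h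
  rw [h]; ring
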